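/- arXiv:1812.09935 — 5 statements merged into one kernel-verified Lean document; each statement's English description precedes it below -/
import Mathlib

section
/- The uniform persistence p-landscape is 1-Lipschitz: for every n-parameter persistence module M, every p ∈ [1,∞], every k ∈ ℕ and all x, y ∈ ℝ^n, one has |λ_p(k,x) − λ_p(k,y)| ≤ ‖x − y‖_p. -/
open scoped ENNReal NNReal BigOperators

universe u v w

/-- A persistence module over a preorder `P` with coefficients in a field `𝕜`:
a functor from the poset `P` to the category of `𝕜`-vector spaces. -/
structure PersistenceModule (P : Type u) [Preorder P] (𝕜 : Type v) [Field 𝕜] where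
  obj : P → Type w
  [isAddCommGroup : ∀ a, AddCommGroup (obj a)]
  [isModule : ∀ a, Module 𝕜 (obj a)]
  map : ∀ {a b : P}, a ≤ b → (obj a →ₗ[𝕜] obj b)
  map_id : ∀ a : P, map (le_refl a) = LinearMap.id
  map_comp : ∀ {a b c : P} (hab : a ≤ b) (hbc : b ≤ c),
      map (le_trans hab hbc) = (map hbc).comp (map hab)

attribute [instance] PersistenceModule.isAddCommGroup PersistenceModule.isModule

namespace PersistenceModule

variable {P : Type u} [Preorder P] {𝕜 : Type v} [Field 𝕜]

/-- The rank invariant `β^{a,b} = dim (Im (M (a ≤ b)))`. -/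
noncomputable def rankInv (M : PersistenceModule P 𝕜) {a b : P} (hab : a ≤ b) : Cardinal :=
  Module.rank 𝕜 (LinearMap.range (M.map hab))

/-- Pointwise finite dimensional persistence module. -/
def PointwiseFiniteDimensional (M : PersistenceModule P 𝕜) : Prop :=
  ∀ a : P, FiniteDimensional 𝕜 (M.obj a)

section Landscape

variable {n : ℕ}

lemma sub_le_add_self {x h : Fin n → ℝ} (hh : 0 ≤ h) : x - h ≤ x + h :=
  le_trans (sub_le_self x hh) (le_add_of_nonneg_right hh)

/-- Generalised landscape function with respect to a size function `ν` on `ℝⁿ`: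
`λ(k, x) = sup { ε ≥ 0 : β^{x-h, x+h} ≥ k for all h ≥ 0 with ν h ≤ ε }`. -/
noncomputable def landscapeBy (ν : (Fin n → ℝ) → ℝ)
    (M : PersistenceModule (Fin n → ℝ) 𝕜) (k : ℕ) (x : Fin n → ℝ) : ℝ≥0∞ :=
  sSup {ε : ℝ≥0∞ | ∀ h : Fin n → ℝ, (hh : 0 ≤ h) → ENNReal.ofReal (ν h) ≤ ε →
    (k : Cardinal) ≤ M.rankInv (sub_le_add_self hh (x := x))}

/-- The uniform persistence `∞`-landscape (the sup norm is the norm on `Fin n → ℝ`). -/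
noncomputable def landscapeInfty (M : PersistenceModule (Fin n → ℝ) 𝕜) :
    ℕ → (Fin n → ℝ) → ℝ≥0∞ :=
  landscapeBy (fun h => ‖h‖) M

/-- The `w`-weighted infinity norm `‖h‖_∞^w = max_i |w_i h_i|`. -/
noncomputable def wnorm (w : Fin n → ℝ) (h : Fin n → ℝ) : ℝ :=
  ‖fun i => w i * h i‖

/-- The `w`-weighted persistence landscape. -/
noncomputable def landscapeW (w : Fin n → ℝ) (M : PersistenceModule (Fin n → ℝ) 𝕜) :
    ℕ → (Fin n → ℝ) → ℝ≥0∞ :=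
  landscapeBy (wnorm w) M

/-- The `p`-norm on `ℝⁿ`, via `PiLp`. -/
noncomputable def pnorm (p : ℝ≥0∞) [Fact (1 ≤ p)] (h : Fin n → ℝ) : ℝ :=
  ‖(WithLp.equiv p (Fin n → ℝ)).symm h‖

/-- The uniform persistence `p`-landscape. -/
noncomputable def landscapeP (p : ℝ≥0∞) [Fact (1 ≤ p)]
    (M : PersistenceModule (Fin n → ℝ) 𝕜) : ℕ → (Fin n → ℝ) → ℝ≥0∞ :=
  landscapeBy (pnorm p) M

end Landscape

section Interleaving

/-- An `(Γ, K)`-interleaving between two persistence modules. -/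
structure Interleaving (M N : PersistenceModule P 𝕜) (Γ K : P → P)
    (hΓ : Monotone Γ) (hΓi : ∀ x, x ≤ Γ x) (hK : Monotone K) (hKi : ∀ x, x ≤ K x) where
  φ : ∀ a : P, M.obj a →ₗ[𝕜] N.obj (Γ a)
  ψ : ∀ a : P, N.obj a →ₗ[𝕜] M.obj (K a)
  φ_nat : ∀ {a b : P} (hab : a ≤ b), (φ b).comp (M.map hab) = (N.map (hΓ hab)).comp (φ a)
  ψ_nat : ∀ {a b : P} (hab : a ≤ b), (ψ b).comp (N.map hab) = (M.map (hK hab)).comp (ψ a)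
  comm₁ : ∀ a : P, (ψ (Γ a)).comp (φ a) = M.map ((hΓi a).trans (hKi (Γ a)))
  comm₂ : ∀ a : P, (φ (K a)).comp (ψ a) = N.map ((hKi a).trans (hΓi (K a)))

variable {n : ℕ}

/-- Interleaving distance with respect to the sublinear projection induced by a size
function `ν`, i.e. `ω_Γ = sup_x ν (Γ x - x)`. -/
noncomputable def interleavingDistBy (ν : (Fin n → ℝ) → ℝ)
    (M N : PersistenceModule (Fin n → ℝ) 𝕜) : ℝ≥0∞ :=
  sInf {ε : ℝ≥0∞ | ∃ (Γ K : (Fin n → ℝ) → (Fin n → ℝ)) (hΓ : Monotone Γ)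
    (hΓi : ∀ x, x ≤ Γ x) (hK : Monotone K) (hKi : ∀ x, x ≤ K x),
    Nonempty (Interleaving M N Γ K hΓ hΓi hK hKi) ∧
    (⨆ x, ENNReal.ofReal (ν (Γ x - x))) ≤ ε ∧ (⨆ x, ENNReal.ofReal (ν (K x - x))) ≤ ε}

/-- The interleaving distance with respect to `ω_Γ = ‖Γ - id‖_∞`. -/
noncomputable def interleavingDist (M N : PersistenceModule (Fin n → ℝ) 𝕜) : ℝ≥0∞ :=
  interleavingDistBy (fun h => ‖h‖) M N

end Interleaving

end PersistenceModule

namespace PersistenceModule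

/-! Let `ν` be subadditive on nonnegative vectors, and let `ε ≥ ν |x - y|` belong to the set whose
supremum is the landscape at `x`. Then `ε - ν |x - y|` belongs to the corresponding set at `y`: for
`h ≥ 0` with `ν h ≤ ε - ν |x - y|`, subadditivity gives `ν (h + |x - y|) ≤ ε`, and the box of radius
`h + |x - y|` around `x` contains the box of radius `h` around `y`. The module map between the
extreme corners of the larger box factors through the one for the smaller box, so its rank is at
most the rank of the latter. For the `p`-norm, `ν |x - y| = ν (x - y)`. -/

section Rank

variable {𝕜 : Type v} [Field 𝕜]

theorem rankInv_trans_trans_le {P : Type u} [Preorder P] (M : PersistenceModule P 𝕜)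
    {a b c d : P} (hab : a ≤ b) (hbc : b ≤ c) (hcd : c ≤ d) :
    M.rankInv (hab.trans (hbc.trans hcd)) ≤ M.rankInv hbc :=
  calc M.rankInv (hab.trans (hbc.trans hcd))
      = ((M.map hcd ∘ₗ M.map hbc) ∘ₗ M.map hab).rank := by
        rw [← M.map_comp, ← M.map_comp]; rfl
    _ ≤ (M.map hcd ∘ₗ M.map hbc).rank := LinearMap.rank_comp_le_left _ _
    _ ≤ (M.map hbc).rank := LinearMap.rank_comp_le_right _ _

theorem rankInv_sub_add_add_abs_sub_le {n : ℕ} (M : PersistenceModule (Fin n → ℝ) 𝕜)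
    (x y : Fin n → ℝ) {h : Fin n → ℝ} (hh : 0 ≤ h) :
    M.rankInv (sub_le_add_self (x := x) (add_nonneg hh (abs_nonneg (x - y)))) ≤
      M.rankInv (sub_le_add_self (x := y) hh) := by
  have lower : x - (h + |x - y|) ≤ y - h := by
    rw [add_comm, ← sub_sub]
    exact sub_le_sub_right (sub_le_comm.mp (le_abs_self (x - y))) h
  have upper : y + h ≤ x + (h + |x - y|) := by
    rw [add_comm h, ← add_assoc, abs_sub_comm]
    exact add_le_add_left (sub_le_iff_le_add'.mp (le_abs_self (y - x))) h
  exact M.rankInv_trans_trans_le lower (sub_le_add_self hh) upper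

end Rank

section SizeFunction

variable {n : ℕ} {𝕜 : Type v} [Field 𝕜] {ν : (Fin n → ℝ) → ℝ}

theorem landscapeBy_le_add (hν : ∀ h z, 0 ≤ h → 0 ≤ z → ν (h + z) ≤ ν h + ν z)
    (M : PersistenceModule (Fin n → ℝ) 𝕜) (k : ℕ) (x y : Fin n → ℝ) :
    landscapeBy ν M k x ≤ landscapeBy ν M k y + ENNReal.ofReal (ν |x - y|) := by
  refine sSup_le fun ε hε => ?_
  rcases le_total ε (ENNReal.ofReal (ν |x - y|)) with hsmall | hlarge
  · exact hsmall.trans le_add_self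
  rw [← tsub_le_iff_right]
  refine le_sSup fun h hh hle => ?_
  have enlarged : ENNReal.ofReal (ν (h + |x - y|)) ≤ ε :=
    calc ENNReal.ofReal (ν (h + |x - y|))
        ≤ ENNReal.ofReal (ν h + ν |x - y|) := ENNReal.ofReal_le_ofReal (hν _ _ hh (abs_nonneg _))
      _ ≤ ENNReal.ofReal (ν h) + ENNReal.ofReal (ν |x - y|) := ENNReal.ofReal_add_le
      _ ≤ ε := add_le_of_le_tsub_right_of_le hlarge hle
  exact (hε _ (add_nonneg hh (abs_nonneg _)) enlarged).trans
    (M.rankInv_sub_add_add_abs_sub_le x y hh)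

theorem landscapeP_lipschitz_general (hν : ∀ h z, 0 ≤ h → 0 ≤ z → ν (h + z) ≤ ν h + ν z)
    (M : PersistenceModule (Fin n → ℝ) 𝕜) (k : ℕ) (x y : Fin n → ℝ) :
    landscapeBy ν M k x ≤ landscapeBy ν M k y + ENNReal.ofReal (ν |x - y|) ∧
    landscapeBy ν M k y ≤ landscapeBy ν M k x + ENNReal.ofReal (ν |x - y|) :=
  ⟨landscapeBy_le_add hν M k x y, abs_sub_comm x y ▸ landscapeBy_le_add hν M k y x⟩

end SizeFunction

section PNorm

variable {n : ℕ} (p : ℝ≥0∞) [Fact (1 ≤ p)]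

theorem pnorm_add_le (h z : Fin n → ℝ) : pnorm p (h + z) ≤ pnorm p h + pnorm p z :=
  norm_add_le (WithLp.toLp p h) (WithLp.toLp p z)

theorem pnorm_abs (h : Fin n → ℝ) : pnorm p |h| = pnorm p h := by
  rcases p.dichotomy with rfl | hp
  · simp [pnorm, PiLp.norm_eq_ciSup]
  · simp [pnorm, PiLp.norm_eq_sum (zero_lt_one.trans_le hp)]

end PNorm

/-- The uniform persistence `p`-landscape is 1-Lipschitz: for every
`n`-parameter persistence module `M`, every `p ∈ [1,∞]`, every `k ∈ ℕ` and all
`x, y ∈ ℝⁿ`, `|λ_p(k,x) − λ_p(k,y)| ≤ ‖x − y‖_p` (stated in `ℝ≥0∞` as the pair of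
inequalities expressing the bound on the absolute difference). -/
theorem landscapeP_lipschitz {n : ℕ} {𝕜 : Type v} [Field 𝕜]
    (M : PersistenceModule (Fin n → ℝ) 𝕜) (p : ℝ≥0∞) [Fact (1 ≤ p)]
    (k : ℕ) (x y : Fin n → ℝ) :
    landscapeP p M k x ≤ landscapeP p M k y + ENNReal.ofReal (pnorm p (x - y)) ∧
    landscapeP p M k y ≤ landscapeP p M k x + ENNReal.ofReal (pnorm p (x - y)) := by
  simpa only [landscapeP, pnorm_abs] using
    landscapeP_lipschitz_general (fun h z _ _ => pnorm_add_le p h z) M k x y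

end PersistenceModule
end

section
/- Multiparameter landscape stability: if M and M' are pointwise finite dimensional n-parameter persistence modules, then the supremum norm of the difference of their uniform persistence ∞-landscapes is bounded by their interleaving distance: sup_{k ∈ ℕ, x ∈ ℝ^n} |λ_∞(M)(k,x) − λ_∞(M')(k,x)| ≤ d^ω(M,M'), where ω is the sublinear projection ω_Γ = ‖Γ − id‖_∞. -/
open scoped ENNReal NNReal BigOperators

universe u v w

namespace PersistenceModule

/-! Given a `(Γ, K)`-interleaving, the map `M (a ≤ b)` factors through `N (c ≤ d)` as soon as
`Γ a ≤ c` and `K d ≤ b`, so its rank is at most that of `N (c ≤ d)`. If `Γ` and `K` move every point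
by at most a fixed vector `e`, this applies to `x - (h + e) ≤ x + (h + e)` and `x - h ≤ x + h`.
Hence enlarging the radius by the size of `e` turns a rank bound for `M` into the same rank bound
for `N`. For the `∞`-norm, a translation with `ω_Γ ≤ δ` moves every point by at most the vector with
all coordinates equal to `δ`, whose norm is again at most `δ`. -/

theorem lift_rank_comp_comp_le {R : Type*} [Semiring R] {V₀ V₁ : Type*} {V₂ : Type v} {V₃ : Type w}
    [AddCommMonoid V₀] [AddCommMonoid V₁] [AddCommMonoid V₂] [AddCommMonoid V₃]
    [Module R V₀] [Module R V₁] [Module R V₂] [Module R V₃]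
    (F : V₂ →ₗ[R] V₃) (f : V₁ →ₗ[R] V₂) (G : V₀ →ₗ[R] V₁) :
    Cardinal.lift.{v} (F ∘ₗ f ∘ₗ G).rank ≤ Cardinal.lift.{w} f.rank :=
  (LinearMap.lift_rank_comp_le_right (f ∘ₗ G) F).trans
    (Cardinal.lift_le.2 (LinearMap.rank_comp_le_left G f))

theorem isGreatest_setOf_pi_norm_le {ι : Type*} [Fintype ι] {r : ℝ} (hr : 0 ≤ r) :
    IsGreatest {h : ι → ℝ | ‖h‖ ≤ r} (fun _ => r) := by
  refine ⟨(pi_norm_le_iff_of_nonneg hr).2 fun _ => (Real.norm_of_nonneg hr).le, fun h hh i => ?_⟩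
  exact (Real.le_norm_self (h i)).trans ((norm_le_pi_norm h i).trans hh)

theorem le_add_of_iSup_ofReal_le {E : Type*} [AddCommGroup E] [Preorder E] [AddLeftMono E]
    {ν : E → ℝ} {δ : ℝ≥0} {e : E} (he : e ∈ upperBounds {h | ν h ≤ δ}) {Γ : E → E}
    (hΓ : ⨆ x, ENNReal.ofReal (ν (Γ x - x)) ≤ δ) (y : E) : Γ y ≤ y + e := by
  have hν : ν (Γ y - y) ≤ δ := ENNReal.ofReal_le_coe.1 (iSup_le_iff.1 hΓ y)
  exact sub_le_iff_le_add'.1 (he hν)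

namespace Interleaving

section

variable {P : Type*} [Preorder P] {𝕜 : Type*} [Field 𝕜]
  {M : PersistenceModule.{_, _, v} P 𝕜} {N : PersistenceModule.{_, _, w} P 𝕜} {Γ K : P → P}
  {hΓ : Monotone Γ} {hΓi : ∀ x, x ≤ Γ x} {hK : Monotone K} {hKi : ∀ x, x ≤ K x}

/-- The interleaving with the roles of the two modules exchanged. -/
def symm (I : Interleaving M N Γ K hΓ hΓi hK hKi) : Interleaving N M K Γ hK hKi hΓ hΓi where
  φ := I.ψ
  ψ := I.φ
  φ_nat := I.ψ_nat
  ψ_nat := I.φ_nat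
  comm₁ := I.comm₂
  comm₂ := I.comm₁

theorem map_eq_comp (I : Interleaving M N Γ K hΓ hΓi hK hKi) {a b c d : P}
    (hab : a ≤ b) (hcd : c ≤ d) (hac : Γ a ≤ c) (hdb : K d ≤ b) :
    M.map hab = (M.map hdb ∘ₗ I.ψ d) ∘ₗ N.map hcd ∘ₗ (N.map hac ∘ₗ I.φ a) := by
  have hψ : I.ψ d ∘ₗ N.map (hac.trans hcd) = M.map (hK (hac.trans hcd)) ∘ₗ I.ψ (Γ a) :=
    I.ψ_nat (hac.trans hcd)
  calc M.map hab
      = M.map hdb ∘ₗ M.map (hK (hac.trans hcd)) ∘ₗ M.map ((hΓi a).trans (hKi (Γ a))) := by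
        rw [← M.map_comp, ← M.map_comp]
    _ = M.map hdb ∘ₗ (M.map (hK (hac.trans hcd)) ∘ₗ I.ψ (Γ a)) ∘ₗ I.φ a := by
        rw [← I.comm₁, LinearMap.comp_assoc]
    _ = M.map hdb ∘ₗ (I.ψ d ∘ₗ N.map hcd ∘ₗ N.map hac) ∘ₗ I.φ a := by
        rw [← hψ, N.map_comp hac hcd]
    _ = (M.map hdb ∘ₗ I.ψ d) ∘ₗ N.map hcd ∘ₗ (N.map hac ∘ₗ I.φ a) := by
        simp only [LinearMap.comp_assoc]

theorem lift_rankInv_le (I : Interleaving M N Γ K hΓ hΓi hK hKi) {a b c d : P}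
    (hab : a ≤ b) (hcd : c ≤ d) (hac : Γ a ≤ c) (hdb : K d ≤ b) :
    Cardinal.lift.{w} (M.rankInv hab) ≤ Cardinal.lift.{v} (N.rankInv hcd) := by
  rw [rankInv, I.map_eq_comp hab hcd hac hdb]
  exact lift_rank_comp_comp_le _ _ _

end

theorem landscapeBy_le_add {n : ℕ} {𝕜 : Type*} [Field 𝕜] {ν : (Fin n → ℝ) → ℝ}
    (hν_add : ∀ g h, ν (g + h) ≤ ν g + ν h)
    {M N : PersistenceModule (Fin n → ℝ) 𝕜} {Γ K : (Fin n → ℝ) → (Fin n → ℝ)}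
    {hΓ : Monotone Γ} {hΓi : ∀ x, x ≤ Γ x} {hK : Monotone K} {hKi : ∀ x, x ≤ K x}
    (I : Interleaving M N Γ K hΓ hΓi hK hKi) {e : Fin n → ℝ}
    (hΓe : ∀ y, Γ y ≤ y + e) (hKe : ∀ y, K y ≤ y + e) (k : ℕ) (x : Fin n → ℝ) :
    landscapeBy ν M k x ≤ landscapeBy ν N k x + ENNReal.ofReal (ν e) := by
  have he : 0 ≤ e := nonneg_of_le_add_right ((hΓi x).trans (hΓe x))
  refine sSup_le fun ε hε => ?_
  rcases le_total ε (ENNReal.ofReal (ν e)) with hle | hle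
  · exact hle.trans le_add_self
  refine tsub_le_iff_right.1 (le_sSup fun h hh hνh => ?_)
  have hhe : 0 ≤ h + e := add_nonneg hh he
  have hνhe : ENNReal.ofReal (ν (h + e)) ≤ ε :=
    calc ENNReal.ofReal (ν (h + e))
        ≤ ENNReal.ofReal (ν h + ν e) := ENNReal.ofReal_le_ofReal (hν_add h e)
      _ ≤ ENNReal.ofReal (ν h) + ENNReal.ofReal (ν e) := ENNReal.ofReal_add_le
      _ ≤ (ε - ENNReal.ofReal (ν e)) + ENNReal.ofReal (ν e) := by gcongr
      _ = ε := tsub_add_cancel_of_le hle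
  have hlower : Γ (x - (h + e)) ≤ x - h := (hΓe _).trans_eq (by abel)
  have hupper : K (x + h) ≤ x + (h + e) := (hKe _).trans_eq (by abel)
  have hrank := I.lift_rankInv_le (sub_le_add_self hhe) (sub_le_add_self hh) hlower hupper
  exact Cardinal.nat_le_lift_iff.1 ((Cardinal.nat_le_lift_iff.2 (hε _ hhe hνhe)).trans hrank)

end Interleaving

section

variable {n : ℕ} {𝕜 : Type*} [Field 𝕜]

theorem interleavingDistBy_comm (ν : (Fin n → ℝ) → ℝ) (M N : PersistenceModule (Fin n → ℝ) 𝕜) :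
    interleavingDistBy ν M N = interleavingDistBy ν N M := by
  unfold interleavingDistBy
  congr 1
  ext ε
  constructor <;> rintro ⟨Γ, K, hΓ, hΓi, hK, hKi, ⟨I⟩, hΓε, hKε⟩ <;>
    exact ⟨K, Γ, hK, hKi, hΓ, hΓi, ⟨I.symm⟩, hKε, hΓε⟩

theorem landscapeBy_le_add_interleavingDistBy {ν : (Fin n → ℝ) → ℝ}
    (hν_add : ∀ g h, ν (g + h) ≤ ν g + ν h)
    (hν_greatest : ∀ δ : ℝ≥0, ∃ e, IsGreatest {h | ν h ≤ δ} e)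
    (M N : PersistenceModule (Fin n → ℝ) 𝕜) (k : ℕ) (x : Fin n → ℝ) :
    landscapeBy ν M k x ≤ landscapeBy ν N k x + interleavingDistBy ν M N := by
  refine tsub_le_iff_left.1 (le_sInf ?_)
  rintro δ ⟨Γ, K, hΓ, hΓi, hK, hKi, ⟨I⟩, hΓδ, hKδ⟩
  refine tsub_le_iff_left.2 ?_
  rcases eq_or_ne δ ⊤ with rfl | hδ
  · simp only [add_top, le_top]
  lift δ to ℝ≥0 using hδ
  obtain ⟨e, heδ, he⟩ := hν_greatest δ
  calc landscapeBy ν M k x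
      ≤ landscapeBy ν N k x + ENNReal.ofReal (ν e) :=
        I.landscapeBy_le_add hν_add (le_add_of_iSup_ofReal_le he hΓδ)
          (le_add_of_iSup_ofReal_le he hKδ) k x
    _ ≤ landscapeBy ν N k x + δ := by
        gcongr
        exact ENNReal.ofReal_le_coe.2 heδ

/-- `hν_greatest` makes a bound on `ω_Γ` the same as a bound on the displacement vectors of `Γ` in
the coordinatewise order. The `p`-norms with `p < ∞` lack this property when `n ≥ 2`. -/
theorem landscapeInfty_stability_general {ν : (Fin n → ℝ) → ℝ}
    (hν_add : ∀ g h, ν (g + h) ≤ ν g + ν h)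
    (hν_greatest : ∀ δ : ℝ≥0, ∃ e, IsGreatest {h | ν h ≤ δ} e)
    (M M' : PersistenceModule (Fin n → ℝ) 𝕜) (k : ℕ) (x : Fin n → ℝ) :
    landscapeBy ν M k x ≤ landscapeBy ν M' k x + interleavingDistBy ν M M' ∧
    landscapeBy ν M' k x ≤ landscapeBy ν M k x + interleavingDistBy ν M M' := by
  refine ⟨landscapeBy_le_add_interleavingDistBy hν_add hν_greatest M M' k x, ?_⟩
  rw [interleavingDistBy_comm ν M M']
  exact landscapeBy_le_add_interleavingDistBy hν_add hν_greatest M' M k x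

end

/-- Multiparameter landscape stability: for pointwise finite dimensional
`n`-parameter persistence modules `M, M'`, the supremum over `k ∈ ℕ` and `x ∈ ℝⁿ` of
`|λ_∞(M)(k,x) − λ_∞(M')(k,x)|` is bounded by the interleaving distance `d^ω(M,M')`
with respect to the sublinear projection `ω_Γ = ‖Γ − id‖_∞` (stated in `ℝ≥0∞` as the
pair of inequalities expressing the bound on the absolute difference, pointwise in
`k` and `x`, which is equivalent to the bound on the supremum). -/
theorem landscapeInfty_stability {n : ℕ} {𝕜 : Type v} [Field 𝕜]
    (M M' : PersistenceModule (Fin n → ℝ) 𝕜)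
    (hM : M.PointwiseFiniteDimensional) (hM' : M'.PointwiseFiniteDimensional)
    (k : ℕ) (x : Fin n → ℝ) :
    landscapeInfty M k x ≤ landscapeInfty M' k x + interleavingDist M M' ∧
    landscapeInfty M' k x ≤ landscapeInfty M k x + interleavingDist M M' :=
  landscapeInfty_stability_general norm_add_le
    (fun δ => ⟨_, isGreatest_setOf_pi_norm_le δ.coe_nonneg⟩) M M' k x

end PersistenceModule
end

section
/- For an interval decomposable n-parameter persistence module M ≅ ⨁_j 𝟙^{I_j}, the uniform persistence ∞-landscape is the pointwise k-th maximum of the landscapes of its interval summands: λ_∞(M)(k,x) = kmax_j λ_∞(𝟙^{I_j})(1,x), where kmax denotes the k-th largest value of the multiset. -/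
open scoped ENNReal NNReal BigOperators

universe u v w

namespace PersistenceModule

variable {P : Type u} [Preorder P] {𝕜 : Type v} [Field 𝕜]

/-- Convexity condition for an interval: if `s, t ∈ I` and `s ≤ r ≤ t` then `r ∈ I`. -/
def IntervalConvex (I : Set P) : Prop :=
  ∀ ⦃s r t : P⦄, s ∈ I → t ∈ I → s ≤ r → r ≤ t → r ∈ I

/-- An interval in a poset: a convex subset any two of whose points are joined by a
zigzag of comparable points inside the subset. -/
def IsInterval (I : Set P) : Prop :=
  IntervalConvex I ∧
  ∀ s ∈ I, ∀ t ∈ I,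
    Relation.ReflTransGen (fun u v : P => u ∈ I ∧ v ∈ I ∧ (u ≤ v ∨ v ≤ u)) s t

/-- The value of the interval module `𝟙^I` at `a`: a copy of `𝕜` if `a ∈ I`, and `0`
otherwise, realised as a submodule of `𝕜`. -/
def intervalSubmodule (𝕜 : Type v) [Field 𝕜] (I : Set P) (a : P) : Submodule 𝕜 𝕜 where
  carrier := {x : 𝕜 | a ∉ I → x = 0}
  zero_mem' := fun _ => rfl
  add_mem' := by
    intro x y hx hy h
    rw [hx h, hy h, add_zero]
  smul_mem' := by
    intro c x hx h
    rw [smul_eq_mul, hx h, mul_zero]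

open Classical in
/-- The internal morphisms of the interval module: the identity whenever possible. -/
noncomputable def intervalMap (𝕜 : Type v) [Field 𝕜] (I : Set P) {a b : P} (_ : a ≤ b) :
    intervalSubmodule 𝕜 I a →ₗ[𝕜] intervalSubmodule 𝕜 I b :=
  if h : a ∈ I ∧ b ∈ I then
    { toFun := fun x => ⟨x.1, fun hb => absurd h.2 hb⟩
      map_add' := fun x y => rfl
      map_smul' := fun c x => rfl }
  else 0

lemma intervalSubmodule_eq_zero {I : Set P} {a : P} (ha : a ∉ I)
    (x : intervalSubmodule 𝕜 I a) : (x : 𝕜) = 0 := x.2 ha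

/-- The interval module `𝟙^I` of a convex subset `I` of the poset `P`. -/
noncomputable def intervalModule (𝕜 : Type v) [Field 𝕜] (I : Set P) (hconv : IntervalConvex I) :
    PersistenceModule P 𝕜 where
  obj a := intervalSubmodule 𝕜 I a
  map hab := intervalMap 𝕜 I hab
  map_id a := by
    ext x
    by_cases h : a ∈ I
    · simp [intervalMap, h]
    · simp only [intervalMap, LinearMap.id_coe, id_eq]
      rw [dif_neg (by tauto)]
      simp [LinearMap.zero_apply, (x.2 h).symm]
  map_comp {a b c} hab hbc := by
    ext x
    by_cases hac : a ∈ I ∧ c ∈ I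
    · have hb : b ∈ I := hconv hac.1 hac.2 hab hbc
      simp only [intervalMap, LinearMap.coe_comp, Function.comp_apply]
      rw [dif_pos hac, dif_pos (⟨hac.1, hb⟩ : a ∈ I ∧ b ∈ I),
        dif_pos (⟨hb, hac.2⟩ : b ∈ I ∧ c ∈ I)]
      rfl
    · simp only [intervalMap, LinearMap.coe_comp, Function.comp_apply]
      rw [dif_neg hac]
      simp only [LinearMap.zero_apply, ZeroMemClass.coe_zero]
      by_cases ha : a ∈ I
      · have hc : c ∉ I := fun hc => hac ⟨ha, hc⟩
        exact ((intervalMap 𝕜 I hbc (intervalMap 𝕜 I hab x)).2 hc).symm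
      · have hx : x = 0 := Subtype.ext (x.2 ha)
        rw [hx]
        simp
end PersistenceModule
namespace PersistenceModule

variable {P : Type u} [Preorder P] {𝕜 : Type v} [Field 𝕜]

/-- Direct sum of a family of persistence modules. -/
noncomputable def dirSum {ι : Type w} (Ms : ι → PersistenceModule P 𝕜) :
    PersistenceModule P 𝕜 where
  obj a := Π₀ i, (Ms i).obj a
  map hab := DFinsupp.mapRange.linearMap (fun i => (Ms i).map hab)
  map_id a := by
    have h : (fun i => (Ms i).map (le_refl a)) = fun i => LinearMap.id := by
      funext i; exact (Ms i).map_id a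
    show DFinsupp.mapRange.linearMap (fun i => (Ms i).map (le_refl a)) = LinearMap.id
    rw [h, DFinsupp.mapRange.linearMap_id]
  map_comp {a b c} hab hbc := by
    have h : (fun i => (Ms i).map (le_trans hab hbc)) =
        fun i => ((Ms i).map hbc).comp ((Ms i).map hab) := by
      funext i; exact (Ms i).map_comp hab hbc
    show DFinsupp.mapRange.linearMap (fun i => (Ms i).map (le_trans hab hbc)) =
      (DFinsupp.mapRange.linearMap (fun i => (Ms i).map hbc)).comp
        (DFinsupp.mapRange.linearMap (fun i => (Ms i).map hab))
    rw [h, DFinsupp.mapRange.linearMap_comp]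

/-- An isomorphism of persistence modules: a natural family of linear equivalences. -/
structure PersIso (M N : PersistenceModule P 𝕜) where
  e : ∀ a : P, M.obj a ≃ₗ[𝕜] N.obj a
  comm : ∀ {a b : P} (hab : a ≤ b) (x : M.obj a), e b (M.map hab x) = N.map hab (e a x)

/-- The zero persistence module. -/
def zeroMod (P : Type u) [Preorder P] (𝕜 : Type v) [Field 𝕜] : PersistenceModule P 𝕜 where
  obj _ := PUnit
  map _ := 0
  map_id _ := Subsingleton.elim _ _
  map_comp _ _ := Subsingleton.elim _ _

/-- Reindexing (pullback) of a persistence module along a monotone map. -/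
def reindex {Q : Type w} [Preorder Q] (φ : Q → P) (hφ : Monotone φ)
    (M : PersistenceModule P 𝕜) : PersistenceModule Q 𝕜 where
  obj a := M.obj (φ a)
  map hab := M.map (hφ hab)
  map_id a := M.map_id (φ a)
  map_comp hab hbc := M.map_comp (hφ hab) (hφ hbc)

/-- The single parameter persistence landscape
`λ(k, t) = sup { h ≥ 0 : β^{t-h, t+h} ≥ k }` (with `sup ∅ = 0`). -/
noncomputable def landscape1 (M : PersistenceModule ℝ 𝕜) (k : ℕ) (t : ℝ) : ℝ≥0∞ :=
  sSup (ENNReal.ofReal ''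
    {h : ℝ | ∃ hh : 0 ≤ h, (k : Cardinal) ≤ M.rankInv (show t - h ≤ t + h by linarith)})

/-- The `k`-th largest value of the multiset of values of `f`. -/
noncomputable def kmax {ι : Type w} (f : ι → ℝ≥0∞) (k : ℕ) : ℝ≥0∞ :=
  sSup {ε : ℝ≥0∞ | ∃ s : Finset ι, s.card = k ∧ ∀ j ∈ s, ε ≤ f j}

end PersistenceModule

namespace PersistenceModule

/-!
The internal map of `⨁ⱼ 𝟙^{Iⱼ}` from `a` to `b` has rank the number of `j` with `a, b ∈ Iⱼ`. So `k`
summands that each persist for all `h` of size below `ε` give rank at least `k` for all such `h`.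
For the converse, the `k` summands seen by the rank could depend on `h`; but in the sup norm
`{h ≥ 0 | ‖h‖ ≤ r}` has a greatest element `c`, and by convexity the `k` intervals that contain
`x - c` and `x + c` contain `x - h` and `x + h` for every such `h`.
-/

section Rank

open Cardinal

universe w₁ w₂

theorem rank_range_dfinsupp_mapRange {K : Type*} [DivisionRing K] {ι : Type*} {V W : ι → Type*}
    [∀ i, AddCommGroup (V i)] [∀ i, Module K (V i)]
    [∀ i, AddCommGroup (W i)] [∀ i, Module K (W i)] (f : ∀ i, V i →ₗ[K] W i) :
    Module.rank K (LinearMap.range (DFinsupp.mapRange.linearMap f)) =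
      Cardinal.sum fun i => Module.rank K (LinearMap.range (f i)) := by
  let incl := DFinsupp.mapRange.linearMap fun i => (LinearMap.range (f i)).subtype
  let restr := DFinsupp.mapRange.linearMap fun i => (f i).rangeRestrict
  have factor : DFinsupp.mapRange.linearMap f = incl ∘ₗ restr :=
    DFinsupp.mapRange.linearMap_comp (fun i => (LinearMap.range (f i)).subtype)
      fun i => (f i).rangeRestrict
  have restr_range : LinearMap.range restr = ⊤ :=
    LinearMap.range_eq_top.2 <| (DFinsupp.mapRange_surjective _ fun i => map_zero _).2
      fun i => (f i).surjective_rangeRestrict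
  have incl_injective : Function.Injective incl :=
    (DFinsupp.mapRange_injective _ fun i => map_zero _).2 fun i => Subtype.val_injective
  rw [factor, LinearMap.range_comp_of_range_eq_top _ restr_range,
    rank_range_of_injective _ incl_injective]
  exact rank_directSum K fun i => LinearMap.range (f i)

theorem cardinalSum_ite_one_zero {ι : Type u} (p : ι → Prop) [DecidablePred p] :
    (Cardinal.sum fun i => if p i then (1 : Cardinal.{v}) else 0) = lift.{v} #{i // p i} := by
  have mk_prop (i : ι) : (if p i then (1 : Cardinal.{v}) else 0) = #(ULift.{v} (PLift (p i))) := by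
    split_ifs with hi <;> simp [hi]
  simp only [mk_prop, ← mk_sigma, ← mk_uLift]
  exact mk_congr ((Equiv.sigmaULiftPLiftEquivSubtype p).trans Equiv.ulift.symm)

theorem natCast_le_mk_subtype_iff {ι : Type u} {p : ι → Prop} {k : ℕ} :
    (k : Cardinal) ≤ #{i // p i} ↔ ∃ s : Finset ι, s.card = k ∧ ∀ i ∈ s, p i := by
  constructor
  · intro hk
    obtain ⟨s, rfl⟩ := exists_finset_eq_card hk
    exact ⟨s.map (Function.Embedding.subtype p), s.card_map _,
      fun _ => s.property_of_mem_map_subtype⟩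
  · rintro ⟨s, rfl, hs⟩
    exact mk_coe_finset.symm.trans_le (mk_subtype_le_of_subset hs)

variable {P : Type u} [Preorder P] {𝕜 : Type v} [Field 𝕜] {a b : P}

theorem PersIso.lift_rankInv_eq {M : PersistenceModule.{u, v, w₁} P 𝕜}
    {N : PersistenceModule.{u, v, w₂} P 𝕜} (e : PersIso M N) (hab : a ≤ b) :
    lift.{w₂} (M.rankInv hab) = lift.{w₁} (N.rankInv hab) := by
  have intertwine : (e.e b).toLinearMap ∘ₗ M.map hab = N.map hab ∘ₗ (e.e a).toLinearMap :=
    LinearMap.ext (e.comm hab)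
  have map_range : (LinearMap.range (M.map hab)).map (e.e b).toLinearMap =
      LinearMap.range (N.map hab) := by
    rw [← LinearMap.range_comp, intertwine, LinearMap.range_comp_of_range_eq_top _ (e.e a).range]
  rw [rankInv, rankInv, ← map_range]
  exact ((e.e b).submoduleMap (LinearMap.range (M.map hab))).lift_rank_eq

theorem rankInv_dirSum {ι : Type w} (M : ι → PersistenceModule P 𝕜) (hab : a ≤ b) :
    (dirSum M).rankInv hab = Cardinal.sum fun i => (M i).rankInv hab :=
  rank_range_dfinsupp_mapRange _

open Classical in
theorem rankInv_intervalModule {I : Set P} (hI : IntervalConvex I) (hab : a ≤ b) :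
    (intervalModule 𝕜 I hI).rankInv hab = if a ∈ I ∧ b ∈ I then 1 else 0 := by
  change Module.rank 𝕜 (LinearMap.range (intervalMap 𝕜 I hab)) = _
  split_ifs with h
  · have range_eq_top : LinearMap.range (intervalMap 𝕜 I hab) = ⊤ := by
      rw [intervalMap, dif_pos h, LinearMap.range_eq_top]
      exact fun y => ⟨⟨y, fun ha => absurd h.1 ha⟩, rfl⟩
    have eq_top : intervalSubmodule 𝕜 I b = ⊤ :=
      Submodule.eq_top_iff'.2 fun _ hb => absurd h.2 hb
    rw [range_eq_top, rank_top, eq_top, rank_top, Module.rank_self]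
  · rw [intervalMap, dif_neg h, LinearMap.range_zero, rank_bot]

theorem natCast_le_rankInv_iff_of_persIso {M : PersistenceModule P 𝕜} {ι : Type w}
    {I : ι → Set P} {hI : ∀ j, IntervalConvex (I j)}
    (e : PersIso M (dirSum fun j => intervalModule 𝕜 (I j) (hI j))) (hab : a ≤ b) {k : ℕ} :
    (k : Cardinal) ≤ M.rankInv hab ↔
      ∃ s : Finset ι, s.card = k ∧ ∀ j ∈ s, a ∈ I j ∧ b ∈ I j := by
  classical
  rw [← nat_le_lift_iff, e.lift_rankInv_eq hab, rankInv_dirSum]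
  simp only [rankInv_intervalModule, cardinalSum_ite_one_zero, nat_le_lift_iff,
    natCast_le_mk_subtype_iff]

end Rank

section Landscape

variable {n : ℕ} {𝕜 : Type v} [Field 𝕜] {ν : (Fin n → ℝ) → ℝ} {k : ℕ} {x : Fin n → ℝ}

theorem le_landscapeBy_iff {M : PersistenceModule (Fin n → ℝ) 𝕜} {ε : ℝ≥0∞} :
    ε ≤ landscapeBy ν M k x ↔ ∀ (h : Fin n → ℝ) (hh : 0 ≤ h), ENNReal.ofReal (ν h) < ε →
      (k : Cardinal) ≤ M.rankInv (sub_le_add_self hh (x := x)) := by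
  refine ⟨fun hε h hh hνh => ?_, fun H => le_of_forall_lt fun δ hδ => ?_⟩
  · obtain ⟨η, hη, hνη⟩ := lt_sSup_iff.1 (hνh.trans_le hε)
    exact hη h hh hνη.le
  · obtain ⟨η, hδη, hηε⟩ := exists_between hδ
    exact hδη.trans_le (le_sSup fun h hh hνh => H h hh (hνh.trans_lt hηε))

theorem le_landscapeBy_intervalModule_iff {I : Set (Fin n → ℝ)} {hI : IntervalConvex I}
    {ε : ℝ≥0∞} :
    ε ≤ landscapeBy ν (intervalModule 𝕜 I hI) 1 x ↔
      ∀ h : Fin n → ℝ, 0 ≤ h → ENNReal.ofReal (ν h) < ε → x - h ∈ I ∧ x + h ∈ I := by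
  classical
  simp only [le_landscapeBy_iff, rankInv_intervalModule, Nat.cast_one,
    Cardinal.one_le_iff_ne_zero, ne_eq, ite_eq_right_iff, one_ne_zero, imp_false, not_not]

theorem IntervalConvex.sub_mem_and_add_mem {G : Type*} [AddCommGroup G] [Preorder G]
    [IsOrderedAddMonoid G] {I : Set G} (hI : IntervalConvex I) {x c h : G}
    (hc : x - c ∈ I ∧ x + c ∈ I) (hh : 0 ≤ h) (hhc : h ≤ c) : x - h ∈ I ∧ x + h ∈ I := by
  have lower : x - c ≤ x - h := sub_le_sub_left hhc x
  have middle : x - h ≤ x + h := (sub_le_self x hh).trans (le_add_of_nonneg_right hh)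
  have upper : x + h ≤ x + c := add_le_add_right hhc x
  exact ⟨hI hc.1 hc.2 lower (middle.trans upper), hI hc.1 hc.2 (lower.trans middle) upper⟩

theorem isGreatest_nonneg_norm_le {ι : Type*} [Fintype ι] (r : ℝ≥0) :
    IsGreatest {h : ι → ℝ | 0 ≤ h ∧ ‖h‖ ≤ r} fun _ => (r : ℝ) := by
  refine ⟨⟨fun _ => r.2, ?_⟩, fun h hh i => ?_⟩
  · exact (pi_norm_le_iff_of_nonneg r.2).2 fun _ => (Real.norm_of_nonneg r.2).le
  · exact (Real.le_norm_self _).trans ((norm_le_pi_norm h i).trans hh.2)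

theorem landscapeInfty_eq_kmax_general
    (hν : ∀ r : ℝ≥0, ∃ c, IsGreatest {h | 0 ≤ h ∧ ν h ≤ r} c)
    {M : PersistenceModule (Fin n → ℝ) 𝕜} {ι : Type w} {I : ι → Set (Fin n → ℝ)}
    {hI : ∀ j, IntervalConvex (I j)}
    (e : PersIso M (dirSum fun j => intervalModule 𝕜 (I j) (hI j))) :
    landscapeBy ν M k x = kmax (fun j => landscapeBy ν (intervalModule 𝕜 (I j) (hI j)) 1 x) k := by
  apply le_antisymm
  · refine ENNReal.le_of_forall_nnreal_lt fun r hr => ?_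
    obtain ⟨c, ⟨hc, hνc⟩, c_greatest⟩ := hν r
    have rank_at_c : (k : Cardinal) ≤ M.rankInv (sub_le_add_self hc (x := x)) :=
      le_landscapeBy_iff.1 le_rfl c hc ((ENNReal.ofReal_le_coe.2 hνc).trans_lt hr)
    obtain ⟨s, hs, hsI⟩ := (natCast_le_rankInv_iff_of_persIso e _).1 rank_at_c
    refine le_sSup ⟨s, hs, fun j hj => le_landscapeBy_intervalModule_iff.2 fun h hh hνh => ?_⟩
    exact (hI j).sub_mem_and_add_mem (hsI j hj) hh
      (c_greatest ⟨hh, ENNReal.ofReal_le_coe.1 hνh.le⟩)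
  · refine le_landscapeBy_iff.2 fun h hh hνh => ?_
    obtain ⟨ε, ⟨s, hs, hsε⟩, hνε⟩ := lt_sSup_iff.1 hνh
    exact (natCast_le_rankInv_iff_of_persIso e _).2
      ⟨s, hs, fun j hj => le_landscapeBy_intervalModule_iff.1 (hsε j hj) h hh hνε⟩

end Landscape

/-- For an interval decomposable `n`-parameter persistence module
`M ≅ ⨁_j 𝟙^{I_j}`, the uniform persistence `∞`-landscape is the pointwise `k`-th
maximum of the landscapes of the interval summands:
`λ_∞(M)(k,x) = kmax_j λ_∞(𝟙^{I_j})(1,x)`. -/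
theorem landscapeInfty_eq_kmax {n : ℕ} {𝕜 : Type v} [Field 𝕜]
    (M : PersistenceModule (Fin n → ℝ) 𝕜)
    {ι : Type} (I : ι → Set (Fin n → ℝ)) (hI : ∀ j, IsInterval (I j))
    (hdec : Nonempty (PersIso M (dirSum fun j => intervalModule 𝕜 (I j) (hI j).1)))
    (k : ℕ) (x : Fin n → ℝ) :
    landscapeInfty M k x
      = kmax (fun j => landscapeInfty (intervalModule 𝕜 (I j) (hI j).1) 1 x) k :=
  hdec.elim <| landscapeInfty_eq_kmax_general fun r => ⟨_, isGreatest_nonneg_norm_le r⟩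

end PersistenceModule
end

section
/- Rescaling commutativity: let w ∈ ℝ^n with w_i > 0 for all i and ‖w‖_∞ = 1, let φ_w(x) = (w_i x_i)_i be the corresponding rescaling of ℝ^n, and let λ_w denote the w-weighted persistence landscape. Then for every n-parameter persistence module M, k ∈ ℕ and x ∈ ℝ^n, λ_w(M ∘ φ_w)(k, x) = λ_𝟏(M)(k, φ_w(x)); that is, the w-weighted landscape of the pullback of M along φ_w equals the pullback along id × φ_w of the uniform (1-weighted) landscape of M. -/
open scoped ENNReal NNReal BigOperators

universe u v w

namespace PersistenceModule

lemma rankInv_congr {P : Type u} [Preorder P] {𝕜 : Type v} [Field 𝕜]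
    (M : PersistenceModule P 𝕜) {a b a' b' : P} (ha : a = a') (hb : b = b')
    (hab : a ≤ b) (hab' : a' ≤ b') : M.rankInv hab = M.rankInv hab' := by
  subst ha hb
  rfl

section Rescaling

variable {m n : ℕ} {𝕜 : Type v} [Field 𝕜]

lemma rankInv_reindex_sub_add (φ : (Fin m → ℝ) →+o (Fin n → ℝ))
    (M : PersistenceModule (Fin n → ℝ) 𝕜) {x h : Fin m → ℝ} (hh : 0 ≤ h) :
    (reindex φ φ.monotone' M).rankInv (sub_le_add_self hh (x := x)) =
      M.rankInv (sub_le_add_self (map_nonneg φ hh) (x := φ x)) :=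
  M.rankInv_congr (map_sub φ x h) (map_add φ x h) (φ.monotone' (sub_le_add_self hh)) _

/-- Being additive and mapping the positive cone onto itself, `φ` matches the pairs
`x - h ≤ x + h` of size `ν (φ h)` with all the pairs `φ x - h' ≤ φ x + h'` of size `ν h'`. -/
theorem landscapeW_rescaling_general (ν : (Fin n → ℝ) → ℝ)
    (φ : (Fin m → ℝ) →+o (Fin n → ℝ)) (hφ : Set.SurjOn φ (Set.Ici 0) (Set.Ici 0))
    (M : PersistenceModule (Fin n → ℝ) 𝕜) (k : ℕ) (x : Fin m → ℝ) :
    landscapeBy (ν ∘ φ) (reindex φ φ.monotone' M) k x = landscapeBy ν M k (φ x) := by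
  unfold landscapeBy
  congr! 3 with ε
  constructor
  · intro rank_ge h hh hε
    obtain ⟨g, hg, rfl⟩ := hφ hh
    exact (rank_ge g hg hε).trans_eq (rankInv_reindex_sub_add φ M hg)
  · intro rank_ge g hg hε
    exact (rank_ge (φ g) (map_nonneg φ hg) hε).trans_eq (rankInv_reindex_sub_add φ M hg).symm

/-- The coordinatewise rescaling `φ_w(x) = (w_i x_i)_i` by nonnegative weights, bundled as a
monotone additive homomorphism. For real weights, `wnorm w` is by definition the sup norm
precomposed with it. -/
def rescaling {ι R : Type*} [Semiring R] [PartialOrder R] [IsOrderedRing R]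
    (w : ι → R) (hw : 0 ≤ w) : (ι → R) →+o (ι → R) where
  toAddMonoidHom := AddMonoidHom.mulLeft w
  monotone' := monotone_mul_left_of_nonneg hw

lemma surjOn_rescaling_Ici_zero {ι R : Type*} [DivisionSemiring R] [LinearOrder R]
    [IsStrictOrderedRing R] {w : ι → R} (hw : ∀ i, 0 < w i) :
    Set.SurjOn (rescaling w fun i => (hw i).le) (Set.Ici 0) (Set.Ici 0) := fun h hh =>
  ⟨fun i => (w i)⁻¹ * h i, fun i => mul_nonneg (inv_nonneg.2 (hw i).le) (hh i),
    funext fun i => mul_inv_cancel_left₀ (hw i).ne' (h i)⟩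

end Rescaling

/-- Rescaling commutativity: for a weighting vector `w` (with
`w_i > 0` and `‖w‖_∞ = 1`) and the rescaling `φ_w(x) = (w_i x_i)_i`, the `w`-weighted
persistence landscape of the pullback `M ∘ φ_w` equals the pullback along
`id × φ_w` of the uniform (`𝟏`-weighted) landscape of `M`:
`λ_w(M ∘ φ_w)(k, x) = λ_𝟏(M)(k, φ_w(x))`. -/
theorem landscapeW_rescaling {n : ℕ} {𝕜 : Type v} [Field 𝕜]
    (M : PersistenceModule (Fin n → ℝ) 𝕜)
    (w : Fin n → ℝ) (hw : ∀ i, 0 < w i) (hw1 : ‖w‖ = 1)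
    (k : ℕ) (x : Fin n → ℝ) :
    landscapeW w
      (reindex (fun (y : Fin n → ℝ) (i : Fin n) => w i * y i)
        (fun _ _ hyz i => mul_le_mul_of_nonneg_left (hyz i) (hw i).le) M) k x
      = landscapeInfty M k (fun i => w i * x i) :=
  landscapeW_rescaling_general (fun h => ‖h‖) (rescaling w fun i => (hw i).le)
    (surjOn_rescaling_Ici_zero hw) M k x

end PersistenceModule
end

section
/- Properties of the single parameter persistence landscape: for any single parameter persistence module M with landscape λ, for every k ∈ ℕ and t ∈ ℝ one has (1) λ(k,t) ≥ 0, (2) λ(k,t) ≥ λ(k+1,t), and (3) for each fixed k the function t ↦ λ(k,t) is 1-Lipschitz. -/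
open scoped ENNReal NNReal BigOperators

universe u v w

namespace PersistenceModule

/-!
A structure map factors through the structure map of every subinterval, so shrinking an interval
can only increase its rank. If `|s - u| ≤ h`, then the interval of radius `h` around `s` contains
the interval of radius `h - |s - u|` around `u`; hence each radius admissible at `s` is, after
losing `|s - u|`, admissible at `u`.
-/

section RankInv

variable {P : Type u} {𝕜 : Type v} [Field 𝕜]

lemma rankInv_le_rankInv_of_subinterval [Preorder P] (M : PersistenceModule P 𝕜)
    {a a' b' b : P} (ha : a ≤ a') (hab : a' ≤ b') (hb : b' ≤ b) :
    M.rankInv ((ha.trans hab).trans hb) ≤ M.rankInv hab := by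
  have factorization :
      M.map ((ha.trans hab).trans hb) = (M.map hb).comp ((M.map hab).comp (M.map ha)) := by
    rw [M.map_comp (ha.trans hab) hb, M.map_comp ha hab]
  calc M.rankInv ((ha.trans hab).trans hb)
      = ((M.map hb).comp ((M.map hab).comp (M.map ha))).rank := by rw [rankInv, factorization]
    _ ≤ ((M.map hab).comp (M.map ha)).rank := LinearMap.rank_comp_le_right _ _
    _ ≤ M.rankInv hab := LinearMap.rank_comp_le_left _ _

lemma rankInv_sub_add_le_of_abs_sub_le [AddCommGroup P] [LinearOrder P] [IsOrderedAddMonoid P]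
    (M : PersistenceModule P 𝕜) {s u h r : P} (hs : s - h ≤ s + h) (hu : u - r ≤ u + r)
    (hsu : |s - u| ≤ h - r) : M.rankInv hs ≤ M.rankInv hu := by
  obtain ⟨hsu_le, hus_le⟩ := abs_sub_le_iff.mp hsu
  have left_endpoints : s - h ≤ u - r := by grind
  have right_endpoints : u + r ≤ s + h := by grind
  exact M.rankInv_le_rankInv_of_subinterval left_endpoints hu right_endpoints

end RankInv

section SingleParameterLandscape

variable {𝕜 : Type v} [Field 𝕜] (M : PersistenceModule ℝ 𝕜)

lemma landscape1_le_iff {k : ℕ} {t : ℝ} {c : ℝ≥0∞} :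
    M.landscape1 k t ≤ c ↔ ∀ h (_ : 0 ≤ h),
      (k : Cardinal) ≤ M.rankInv (show t - h ≤ t + h by linarith) → ENNReal.ofReal h ≤ c := by
  simp only [landscape1, sSup_le_iff, Set.forall_mem_image, Set.mem_ofPred_eq, forall_exists_index]

lemma ofReal_le_landscape1 {k : ℕ} {t h : ℝ} (hh : 0 ≤ h)
    (hk : (k : Cardinal) ≤ M.rankInv (show t - h ≤ t + h by linarith)) :
    ENNReal.ofReal h ≤ M.landscape1 k t :=
  M.landscape1_le_iff.mp le_rfl h hh hk

lemma landscape1_antitone (t : ℝ) : Antitone fun k ↦ M.landscape1 k t := by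
  intro k l hkl
  refine M.landscape1_le_iff.mpr fun h hh hl ↦ M.ofReal_le_landscape1 hh ?_
  exact (Nat.cast_le.mpr hkl).trans hl

lemma landscape1_le_add_ofReal_abs_sub (k : ℕ) (s u : ℝ) :
    M.landscape1 k s ≤ M.landscape1 k u + ENNReal.ofReal |s - u| := by
  refine M.landscape1_le_iff.mpr fun h hh hk ↦ ?_
  suffices ENNReal.ofReal (h - |s - u|) ≤ M.landscape1 k u by
    rwa [← tsub_le_iff_right, ← ENNReal.ofReal_sub h (abs_nonneg _)]
  rcases le_total (h - |s - u|) 0 with nonpos | nonneg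
  · simp only [ENNReal.ofReal_of_nonpos nonpos, zero_le]
  · refine M.ofReal_le_landscape1 nonneg (hk.trans ?_)
    exact M.rankInv_sub_add_le_of_abs_sub_le _ _ (sub_sub_cancel h _).ge

end SingleParameterLandscape

/-- Properties of the single parameter persistence landscape: for any
single parameter persistence module `M` with landscape `λ`, every `k ∈ ℕ` and `t ∈ ℝ`:
(1) `λ(k,t) ≥ 0`; (2) `λ(k,t) ≥ λ(k+1,t)`; (3) for fixed `k`, `t ↦ λ(k,t)` is
1-Lipschitz (stated as `λ(k,s) ≤ λ(k,u) + |s − u|` for all `s, u`). -/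
theorem landscape1_properties {𝕜 : Type v} [Field 𝕜]
    (M : PersistenceModule ℝ 𝕜) (k : ℕ) (t : ℝ) :
    0 ≤ M.landscape1 k t ∧
    M.landscape1 (k + 1) t ≤ M.landscape1 k t ∧
    (∀ s u : ℝ, M.landscape1 k s ≤ M.landscape1 k u + ENNReal.ofReal |s - u|) :=
  ⟨zero_le, M.landscape1_antitone t k.le_succ, M.landscape1_le_add_ofReal_abs_sub k⟩

end PersistenceModule
end
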